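/- Hierarchy of preorders: ⊑int ⊆ ⊑int·imp ⊊ ⊑ctx on λ-terms; in particular, if t ⊑int·imp u then t ⊑ctx u, and the inclusion ⊑int·imp ⊆ ⊑ctx is strict, as witnessed by I = λx.x and 1 = λxy.xy, for which I ⊑ctx 1 but not I ⊑int·imp 1. -/

import Mathlib

set_option autoImplicit false

/-! ### Players -/

inductive Player : Type
  | white
  | black
deriving DecidableEq

/-- The opposite player. -/
def Player.op : Player → Player
  | .white => .black
  | .black => .white

/-- `gamma p q` is `0` if the players agree (silent) and `1` otherwise (interaction). -/
def Player.gamma (p q : Player) : ℕ := if p = q then 0 else 1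

/-! ### Ordinary λ-terms (de Bruijn representation) -/

inductive Lam : Type
  | var : ℕ → Lam
  | lam : Lam → Lam
  | app : Lam → Lam → Lam
deriving DecidableEq

namespace Lam

/-- Shift the free de Bruijn indices ≥ `d` by one. -/
def liftAt : Lam → ℕ → Lam
  | .var n, d => .var (if n < d then n else n + 1)
  | .lam t, d => .lam (t.liftAt (d + 1))
  | .app t u, d => .app (t.liftAt d) (u.liftAt d)

/-- Capture-avoiding substitution of `u` for the de Bruijn index `x`. -/
def subst : Lam → ℕ → Lam → Lam
  | .var n, x, u => if n = x then u else if x < n then .var (n - 1) else .var n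
  | .lam t, x, u => .lam (t.subst (x + 1) (u.liftAt 0))
  | .app t s, x, u => .app (t.subst x u) (s.subst x u)

end Lam

/-- Root β-rule: `(λx.t) u ↦ t[x:=u]`. -/
inductive LBetaRoot : Lam → Lam → Prop
  | beta (t u : Lam) : LBetaRoot (.app (.lam t) u) (t.subst 0 u)

/-- Root η-rule: `λx. t x ↦ t` with `x ∉ FV(t)` (enforced by the lifting). -/
inductive LEtaRoot : Lam → Lam → Prop
  | eta (t : Lam) : LEtaRoot (.lam (.app (t.liftAt 0) (.var 0))) t

/-- Closure of a root relation under all contexts. -/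
inductive LFull (R : Lam → Lam → Prop) : Lam → Lam → Prop
  | root {t u : Lam} : R t u → LFull R t u
  | lam {t u : Lam} : LFull R t u → LFull R (.lam t) (.lam u)
  | appL {t t' : Lam} (u : Lam) : LFull R t t' → LFull R (.app t u) (.app t' u)
  | appR (t : Lam) {u u' : Lam} : LFull R u u' → LFull R (.app t u) (.app t u')

/-- Closure under applicative spine contexts `⟨·⟩ t1 … tk`. -/
inductive LSpine (R : Lam → Lam → Prop) : Lam → Lam → Prop
  | root {t u : Lam} : R t u → LSpine R t u
  | appL {t t' : Lam} (u : Lam) : LSpine R t t' → LSpine R (.app t u) (.app t' u)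

/-- Closure under head contexts `λx1…xn.⟨·⟩ t1 … tk`. -/
inductive LHead (R : Lam → Lam → Prop) : Lam → Lam → Prop
  | spine {t u : Lam} : LSpine R t u → LHead R t u
  | lam {t u : Lam} : LHead R t u → LHead R (.lam t) (.lam u)

/-- β-reduction. -/
def LBeta : Lam → Lam → Prop := LFull LBetaRoot
/-- η-reduction. -/
def LEta : Lam → Lam → Prop := LFull LEtaRoot
/-- Head reduction. -/
def LHStep : Lam → Lam → Prop := LHead LBetaRoot
/-- Multistep head reduction. -/
def LHSteps : Lam → Lam → Prop := Relation.ReflTransGen LHStep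

/-- β-conversion (reflexive-symmetric-transitive closure of β-reduction). -/
def LBetaConv : Lam → Lam → Prop :=
  Relation.ReflTransGen (fun a b => LBeta a b ∨ LBeta b a)
/-- η-conversion. -/
def LEtaConv : Lam → Lam → Prop :=
  Relation.ReflTransGen (fun a b => LEta a b ∨ LEta b a)

/-- Head normal forms: no head step out of `t`. -/
def Lam.LHNF (t : Lam) : Prop := ∀ u, ¬ LHStep t u

/-- Head convergence: `t ⇓h`. -/
def Lam.HConv (t : Lam) : Prop := ∃ h, LHSteps t h ∧ h.LHNF

/-- Ordinary contexts (one hole). -/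
inductive LCtx : Type
  | hole : LCtx
  | lam : LCtx → LCtx
  | appL : LCtx → Lam → LCtx
  | appR : Lam → LCtx → LCtx

/-- Plugging (allowing variable capture). -/
def LCtx.fill : LCtx → Lam → Lam
  | .hole, t => t
  | .lam C, t => .lam (C.fill t)
  | .appL C u, t => .app (C.fill t) u
  | .appR s C, t => .app s (C.fill t)

/-- Head contextual preorder on λ-terms. -/
def CtxLe (t u : Lam) : Prop := ∀ C : LCtx, (C.fill t).HConv → (C.fill u).HConv

/-! ### Checkers terms -/

inductive CTerm : Type
  | var : ℕ → CTerm
  | lam : Player → CTerm → CTerm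
  | app : Player → CTerm → CTerm → CTerm
deriving DecidableEq

namespace CTerm

/-- Shift the free de Bruijn indices ≥ `d` by one. -/
def liftAt : CTerm → ℕ → CTerm
  | .var n, d => .var (if n < d then n else n + 1)
  | .lam p t, d => .lam p (t.liftAt (d + 1))
  | .app p t u, d => .app p (t.liftAt d) (u.liftAt d)

/-- Capture-avoiding substitution of `u` for the de Bruijn index `x`. -/
def subst : CTerm → ℕ → CTerm → CTerm
  | .var n, x, u => if n = x then u else if x < n then .var (n - 1) else .var n
  | .lam p t, x, u => .lam p (t.subst (x + 1) (u.liftAt 0))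
  | .app p t s, x, u => .app p (t.subst x u) (s.subst x u)

/-- The underlying ordinary λ-term of a checkers term. -/
def untag : CTerm → Lam
  | .var n => .var n
  | .lam _ t => .lam t.untag
  | .app _ t u => .app t.untag u.untag

end CTerm

/-- Player lifting: tag every abstraction and application with player `p`. -/
def Lam.tag : Lam → Player → CTerm
  | .var n, _ => .var n
  | .lam t, p => .lam p (t.tag p)
  | .app t u, p => .app p (t.tag p) (u.tag p)

/-- Silent β root rule: the abstraction and the application carry the same player. -/
inductive SilentRoot : CTerm → CTerm → Prop
  | beta (p : Player) (t u : CTerm) : SilentRoot (.app p (.lam p t) u) (t.subst 0 u)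

/-- Interaction β root rule: the application carries the opposite player of the abstraction. -/
inductive InterRoot : CTerm → CTerm → Prop
  | beta (p : Player) (t u : CTerm) : InterRoot (.app p.op (.lam p t) u) (t.subst 0 u)

/-- Closure of a root relation under all checkers contexts. -/
inductive CFull (R : CTerm → CTerm → Prop) : CTerm → CTerm → Prop
  | root {t u : CTerm} : R t u → CFull R t u
  | lam (p : Player) {t u : CTerm} : CFull R t u → CFull R (.lam p t) (.lam p u)
  | appL (p : Player) {t t' : CTerm} (u : CTerm) : CFull R t t' → CFull R (.app p t u) (.app p t' u)
  | appR (p : Player) (t : CTerm) {u u' : CTerm} : CFull R u u' → CFull R (.app p t u) (.app p t u')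

/-- Closure under applicative spine contexts `⟨·⟩ @_{q1} t1 … @_{qk} tk`. -/
inductive CSpine (R : CTerm → CTerm → Prop) : CTerm → CTerm → Prop
  | root {t u : CTerm} : R t u → CSpine R t u
  | appL (p : Player) {t t' : CTerm} (u : CTerm) : CSpine R t t' → CSpine R (.app p t u) (.app p t' u)

/-- Closure under checkers head contexts `λ_{p1}x1…λ_{pn}xn.⟨·⟩ @_{q1} t1 … @_{qk} tk`. -/
inductive CHead (R : CTerm → CTerm → Prop) : CTerm → CTerm → Prop
  | spine {t u : CTerm} : CSpine R t u → CHead R t u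
  | lam (p : Player) {t u : CTerm} : CHead R t u → CHead R (.lam p t) (.lam p u)

/-- Silent β-reduction `→τ`. -/
def StepTau : CTerm → CTerm → Prop := CFull SilentRoot
/-- Interaction β-reduction `→⊛`. -/
def StepInt : CTerm → CTerm → Prop := CFull InterRoot
/-- Checkers β-reduction `→βch`. -/
def StepBch (t u : CTerm) : Prop := StepTau t u ∨ StepInt t u

/-- Silent head reduction `→hτ`. -/
def HStepTau : CTerm → CTerm → Prop := CHead SilentRoot
/-- Interaction head reduction `→h⊛`. -/
def HStepInt : CTerm → CTerm → Prop := CHead InterRoot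
/-- Checkers head reduction `→hch`. -/
def HStepCh (t u : CTerm) : Prop := HStepTau t u ∨ HStepInt t u

/-- Checkers head normal form. -/
def CTerm.HNF (t : CTerm) : Prop := ∀ u, ¬ HStepCh t u

/-- `BigStep t k` means `t ⇓^k`: the (deterministic) checkers head evaluation of `t`
terminates and performs exactly `k` interaction steps. -/
inductive BigStep : CTerm → ℕ → Prop
  | nf {t : CTerm} : t.HNF → BigStep t 0
  | silent {t u : CTerm} {k : ℕ} : HStepTau t u → BigStep u k → BigStep t k
  | inter {t u : CTerm} {k : ℕ} : HStepInt t u → BigStep u k → BigStep t (k + 1)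

/-- `HRed t n i u`: a checkers head reduction sequence from `t` to `u` of length `n`
containing exactly `i` interaction steps. -/
inductive HRed : CTerm → ℕ → ℕ → CTerm → Prop
  | refl (t : CTerm) : HRed t 0 0 t
  | silent {t u s : CTerm} {n i : ℕ} : HStepTau t u → HRed u n i s → HRed t (n + 1) i s
  | inter {t u s : CTerm} {n i : ℕ} : HStepInt t u → HRed u n i s → HRed t (n + 1) (i + 1) s

/-- Checkers contexts (one hole). -/
inductive CCtx : Type
  | hole : CCtx
  | lam : Player → CCtx → CCtx
  | appL : Player → CCtx → CTerm → CCtx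
  | appR : Player → CTerm → CCtx → CCtx

/-- Plugging (allowing variable capture). -/
def CCtx.fill : CCtx → CTerm → CTerm
  | .hole, t => t
  | .lam p C, t => .lam p (C.fill t)
  | .appL p C u, t => .app p (C.fill t) u
  | .appR p s C, t => .app p s (C.fill t)

/-- Player lifting of ordinary contexts. -/
def LCtx.tag : LCtx → Player → CCtx
  | .hole, _ => .hole
  | .lam C, p => .lam p (C.tag p)
  | .appL C u, p => .appL p (C.tag p) (u.tag p)
  | .appR s C, p => .appR p (s.tag p) (C.tag p)

/-- Checkers interaction preorder `≼ctx⊛` on checkers terms. -/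
def IntCtxLe (t u : CTerm) : Prop :=
  ∀ (C : CCtx) (k : ℕ), BigStep (C.fill t) k → BigStep (C.fill u) k

/-- Checkers interaction improvement `≼imp⊛` on checkers terms. -/
def ImpCtxLe (t u : CTerm) : Prop :=
  ∀ (C : CCtx) (k : ℕ), BigStep (C.fill t) k → ∃ k', k' ≤ k ∧ BigStep (C.fill u) k'

/-- Interaction preorder `⊑int` on ordinary λ-terms, via black lifting. -/
def IntLe (t u : Lam) : Prop := IntCtxLe (t.tag .black) (u.tag .black)

/-- Interaction improvement `⊑int·imp` on ordinary λ-terms, via black lifting. -/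
def ImpLe (t u : Lam) : Prop := ImpCtxLe (t.tag .black) (u.tag .black)

/-- Interaction equivalence `≡int`. -/
def IntEq (t u : Lam) : Prop := IntLe t u ∧ IntLe u t

/-- Silent conversion `=τ`: reflexive-symmetric-transitive closure of `→τ`. -/
def SilentConv : CTerm → CTerm → Prop :=
  Relation.ReflTransGen (fun a b => StepTau a b ∨ StepTau b a)

/-!
The first inclusion is immediate. For the second, erasing the player tags maps the checkers head
step onto the ordinary head step, so a checkers term evaluates, with some number of interactions,
exactly when its erasure is head normalizable: forgetting the count leaves the head contextual
preorder.

For strictness, η-expansion is contained in `⊑ctx`: if `u` parallel η-reduces to `t`, then every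
head step of `t` is simulated by `u`, the η-expansions standing in the way being removed from the
head position by β-steps. On the other hand the context `⟨·⟩ @◦ x @◦ x` sees the η-expansion: it
interacts once with the abstraction of `I`, but twice with those of `1`.
-/

/-! ### Lifting and substitution -/

namespace Lam

theorem liftAt_liftAt_of_le (t : Lam) {e d : ℕ} (h : e ≤ d) :
    (t.liftAt e).liftAt (d + 1) = (t.liftAt d).liftAt e := by
  induction t generalizing e d with grind [liftAt]

theorem subst_liftAt_self (t : Lam) (d : ℕ) (u : Lam) : (t.liftAt d).subst d u = t := by
  induction t generalizing d u with grind [liftAt, subst]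

theorem subst_succ_liftAt_of_le (t : Lam) {d x : ℕ} (u : Lam) (h : d ≤ x) :
    (t.liftAt d).subst (x + 1) (u.liftAt d) = (t.subst x u).liftAt d := by
  induction t generalizing d x u with grind [liftAt, subst, liftAt_liftAt_of_le]

theorem subst_liftAt_succ_of_le (t : Lam) {d x : ℕ} (u : Lam) (h : x ≤ d) :
    (t.liftAt (d + 1)).subst x (u.liftAt d) = (t.subst x u).liftAt d := by
  induction t generalizing d x u with grind [liftAt, subst, liftAt_liftAt_of_le]

theorem subst_liftAt_succ_var (t : Lam) (x : ℕ) : (t.liftAt (x + 1)).subst x (.var x) = t := by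
  induction t generalizing x with grind [liftAt, subst]

end Lam

/-! ### Head reduction as a partial function -/

/-- Head reduction of λ-terms as a partial function. -/
def Lam.headStep : Lam → Option Lam
  | .var _ => none
  | .lam t => t.headStep.map .lam
  | .app (.lam t) u => some (t.subst 0 u)
  | .app t u => t.headStep.map (.app · u)

theorem LSpine.headStep_eq_some {t u : Lam} (h : LSpine LBetaRoot t u) : t.headStep = some u := by
  induction h with
  | root h => cases h; rfl
  | @appL t _ _ h ih =>
    cases t with
    | var n => cases ih
    | lam t => cases h with | root h => cases h
    | app t s => simp [Lam.headStep, ih]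

theorem LHead.appL {R : Lam → Lam → Prop} {t t' : Lam} (u : Lam) (ht : ∀ b, t ≠ .lam b)
    (h : LHead R t t') : LHead R (.app t u) (.app t' u) := by
  cases h with
  | spine h => exact .spine (.appL u h)
  | lam h => exact absurd rfl (ht _)

namespace Lam

theorem headStep_eq_some_iff {t u : Lam} : t.headStep = some u ↔ LHStep t u := by
  constructor
  · intro h
    fun_induction headStep t generalizing u with
    | case1 n => cases h
    | case2 t ih =>
      obtain ⟨u', hu', rfl⟩ := Option.map_eq_some_iff.1 h
      exact .lam (ih hu')
    | case3 t s =>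
      cases h
      exact .spine (.root (.beta t s))
    | case4 t s ht ih =>
      obtain ⟨t', ht', rfl⟩ := Option.map_eq_some_iff.1 h
      exact LHead.appL s ht (ih ht')
  · intro h
    induction h with
    | spine h => exact h.headStep_eq_some
    | lam _ ih => simp [headStep, ih]

theorem lhnf_iff_headStep_eq_none {t : Lam} : t.LHNF ↔ t.headStep = none := by
  simp [LHNF, Option.eq_none_iff_forall_ne_some, headStep_eq_some_iff]

end Lam

/-- Checkers head reduction as a partial function: the reduct comes with the number of interaction
steps, `0` or `1`, that the step performs. -/
def CTerm.headStep : CTerm → Option (ℕ × CTerm)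
  | .var _ => none
  | .lam p t => t.headStep.map (Prod.map id (.lam p))
  | .app p (.lam q t) u => some (p.gamma q, t.subst 0 u)
  | .app p t u => t.headStep.map (Prod.map id (.app p · u))

section

variable {R : CTerm → CTerm → Prop} {i : ℕ} {t u : CTerm}

theorem CSpine.headStep_eq_some (hR : ∀ a b, R a b → a.headStep = some (i, b))
    (hlam : ∀ p a b, ¬ R (.lam p a) b) (h : CSpine R t u) : t.headStep = some (i, u) := by
  induction h with
  | root h => exact hR _ _ h
  | @appL _ t _ _ h ih =>
    cases t with
    | var n => cases ih
    | lam p t => cases h with | root h => exact absurd h (hlam _ _ _)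
    | app p t s => simp [CTerm.headStep, ih]

theorem CHead.headStep_eq_some (hR : ∀ a b, R a b → a.headStep = some (i, b))
    (hlam : ∀ p a b, ¬ R (.lam p a) b) (h : CHead R t u) : t.headStep = some (i, u) := by
  induction h with
  | spine h => exact h.headStep_eq_some hR hlam
  | lam p _ ih => simp [CTerm.headStep, ih]

theorem CHead.appL (p : Player) (s : CTerm) (ht : ∀ q b, t ≠ .lam q b) (h : CHead R t u) :
    CHead R (.app p t s) (.app p u s) := by
  cases h with
  | spine h => exact .spine (.appL p s h)
  | lam q h => exact absurd rfl (ht _ _)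

theorem HStepTau.headStep_eq_some (h : HStepTau t u) : t.headStep = some (0, u) := by
  refine CHead.headStep_eq_some ?_ ?_ h
  · rintro _ _ ⟨p, a, b⟩
    simp [CTerm.headStep, Player.gamma]
  · rintro _ _ _ ⟨⟩

theorem HStepInt.headStep_eq_some (h : HStepInt t u) : t.headStep = some (1, u) := by
  refine CHead.headStep_eq_some ?_ ?_ h
  · rintro _ _ ⟨p, a, b⟩
    cases p <;> rfl
  · rintro _ _ _ ⟨⟩

theorem silentRoot_or_interRoot (p q : Player) (t u : CTerm) :
    p.gamma q = 0 ∧ SilentRoot (.app p (.lam q t) u) (t.subst 0 u) ∨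
      p.gamma q = 1 ∧ InterRoot (.app p (.lam q t) u) (t.subst 0 u) := by
  cases p <;> cases q
  · exact .inl ⟨rfl, .beta .white t u⟩
  · exact .inr ⟨rfl, .beta .black t u⟩
  · exact .inr ⟨rfl, .beta .white t u⟩
  · exact .inl ⟨rfl, .beta .black t u⟩

end

namespace CTerm

variable {t u : CTerm} {i k : ℕ}

theorem headStep_eq_some_iff :
    t.headStep = some (i, u) ↔ i = 0 ∧ HStepTau t u ∨ i = 1 ∧ HStepInt t u := by
  constructor
  · intro h
    fun_induction headStep t generalizing u with
    | case1 n => cases h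
    | case2 p t ih =>
      obtain ⟨⟨i, u⟩, hu, ⟨⟩⟩ := Option.map_eq_some_iff.1 h
      exact (ih hu).imp (.imp_right (.lam p)) (.imp_right (.lam p))
    | case3 p q t s =>
      cases h
      exact (silentRoot_or_interRoot p q t s).imp (.imp_right (.spine <| .root ·))
        (.imp_right (.spine <| .root ·))
    | case4 p t s ht ih =>
      obtain ⟨⟨i, t'⟩, ht', ⟨⟩⟩ := Option.map_eq_some_iff.1 h
      exact (ih ht').imp (.imp_right (CHead.appL p s ht)) (.imp_right (CHead.appL p s ht))
  · rintro (⟨rfl, h⟩ | ⟨rfl, h⟩)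
    · exact h.headStep_eq_some
    · exact h.headStep_eq_some

theorem hStepCh_iff_exists_headStep : HStepCh t u ↔ ∃ i, t.headStep = some (i, u) := by
  simp [HStepCh, headStep_eq_some_iff, exists_or]

theorem hnf_iff_headStep_eq_none : t.HNF ↔ t.headStep = none := by
  simp only [HNF, hStepCh_iff_exists_headStep, not_exists, Option.eq_none_iff_forall_ne_some,
    Prod.forall]
  exact forall_comm

theorem bigStep_iff_of_headStep_eq_none (h : t.headStep = none) : BigStep t k ↔ k = 0 := by
  constructor
  · rintro (_ | ⟨hs, _⟩ | ⟨hs, _⟩)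
    · rfl
    · cases h.symm.trans hs.headStep_eq_some
    · cases h.symm.trans hs.headStep_eq_some
  · rintro rfl
    exact .nf (hnf_iff_headStep_eq_none.2 h)

theorem bigStep_iff_of_headStep_eq_some (h : t.headStep = some (i, u)) :
    BigStep t k ↔ ∃ k', BigStep u k' ∧ k = k' + i := by
  constructor
  · rintro (ht | ⟨hs, hk⟩ | ⟨hs, hk⟩)
    · cases h.symm.trans (hnf_iff_headStep_eq_none.1 ht)
    · cases h.symm.trans hs.headStep_eq_some
      exact ⟨k, hk, rfl⟩
    · cases h.symm.trans hs.headStep_eq_some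
      exact ⟨_, hk, rfl⟩
  · rintro ⟨k', hk, rfl⟩
    obtain ⟨rfl, hs⟩ | ⟨rfl, hs⟩ := headStep_eq_some_iff.1 h
    · exact .silent hs hk
    · exact .inter hs hk

end CTerm

/-! ### Erasing the player tags -/

namespace CTerm

theorem untag_liftAt (t : CTerm) (d : ℕ) : (t.liftAt d).untag = t.untag.liftAt d := by
  induction t generalizing d with simp [liftAt, untag, Lam.liftAt, *]

theorem untag_subst (t : CTerm) (x : ℕ) (u : CTerm) :
    (t.subst x u).untag = t.untag.subst x u.untag := by
  induction t generalizing x u with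
  | var n =>
    simp only [subst, untag, Lam.subst]
    split_ifs <;> rfl
  | lam p t ih => simp [subst, untag, Lam.subst, ih, untag_liftAt]
  | app p t s iht ihs => simp [subst, untag, Lam.subst, iht, ihs]

theorem headStep_untag (t : CTerm) :
    t.untag.headStep = t.headStep.map fun s => s.2.untag := by
  fun_induction headStep t with
  | case1 n => rfl
  | case2 p t ih => simp [untag, Lam.headStep, ih, Function.comp_def]
  | case3 p q t u => simp [untag, Lam.headStep, untag_subst]
  | case4 p t u ht ih =>
    cases t with
    | var n => rfl
    | lam q b => exact absurd rfl (ht q b)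
    | app q a b => simp_all [untag, Lam.headStep, Function.comp_def]

theorem lhStep_untag_of_headStep_eq_some {t u : CTerm} {i : ℕ} (h : t.headStep = some (i, u)) :
    LHStep t.untag u.untag :=
  Lam.headStep_eq_some_iff.1 (by simp [headStep_untag, h])

theorem hConv_untag_of_bigStep {t : CTerm} {k : ℕ} (h : BigStep t k) : t.untag.HConv := by
  induction h with
  | nf h =>
    refine ⟨_, .refl, Lam.lhnf_iff_headStep_eq_none.2 ?_⟩
    rw [headStep_untag, hnf_iff_headStep_eq_none.1 h, Option.map_none]
  | silent hs _ ih =>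
    obtain ⟨v, hv, hnf⟩ := ih
    exact ⟨v, hv.head (lhStep_untag_of_headStep_eq_some hs.headStep_eq_some), hnf⟩
  | inter hs _ ih =>
    obtain ⟨v, hv, hnf⟩ := ih
    exact ⟨v, hv.head (lhStep_untag_of_headStep_eq_some hs.headStep_eq_some), hnf⟩

theorem exists_bigStep_of_hConv_untag {t : CTerm} (h : t.untag.HConv) : ∃ k, BigStep t k := by
  obtain ⟨v, hv, hnf⟩ := h
  generalize hs : t.untag = s at hv
  induction hv using Relation.ReflTransGen.head_induction_on generalizing t with
  | refl =>
    subst hs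
    rw [Lam.lhnf_iff_headStep_eq_none, headStep_untag, Option.map_eq_none_iff] at hnf
    exact ⟨0, (bigStep_iff_of_headStep_eq_none hnf).2 rfl⟩
  | head hstep _ ih =>
    subst hs
    rw [← Lam.headStep_eq_some_iff, headStep_untag, Option.map_eq_some_iff] at hstep
    obtain ⟨⟨i, u⟩, htu, hu⟩ := hstep
    obtain ⟨k, hk⟩ := ih hu
    exact ⟨k + i, (bigStep_iff_of_headStep_eq_some htu).2 ⟨k, hk, rfl⟩⟩

theorem exists_bigStep_iff_hConv_untag {t : CTerm} : (∃ k, BigStep t k) ↔ t.untag.HConv :=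
  ⟨fun ⟨_, h⟩ => hConv_untag_of_bigStep h, exists_bigStep_of_hConv_untag⟩

end CTerm

theorem Lam.untag_tag (t : Lam) (p : Player) : (t.tag p).untag = t := by
  induction t with simp [tag, CTerm.untag, *]

theorem LCtx.untag_fill_tag (C : LCtx) (p : Player) (t : CTerm) :
    ((C.tag p).fill t).untag = C.fill t.untag := by
  induction C with simp [tag, fill, CCtx.fill, CTerm.untag, Lam.untag_tag, *]

theorem ImpCtxLe.ctxLe_untag {t u : CTerm} (h : ImpCtxLe t u) : CtxLe t.untag u.untag := by
  intro C hC
  rw [← C.untag_fill_tag .black, ← CTerm.exists_bigStep_iff_hConv_untag] at hC ⊢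
  obtain ⟨k, hk⟩ := hC
  obtain ⟨k', -, hk'⟩ := h _ k hk
  exact ⟨k', hk'⟩

theorem ImpLe.ctxLe {t u : Lam} (h : ImpLe t u) : CtxLe t u := by
  simpa only [Lam.untag_tag] using ImpCtxLe.ctxLe_untag h

theorem IntCtxLe.impCtxLe {t u : CTerm} (h : IntCtxLe t u) : ImpCtxLe t u :=
  fun C k hk => ⟨k, le_rfl, h C k hk⟩

/-! ### Head evaluation -/

/-- Neutral terms: a variable applied to arbitrarily many arguments. -/
inductive Lam.Neutral : Lam → Prop
  | var (n : ℕ) : Neutral (.var n)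
  | app {t : Lam} (u : Lam) : Neutral t → Neutral (.app t u)

/-- Head convergence presented as an evaluation: reduce the spine until it becomes an abstraction,
whose body is evaluated in turn, or a neutral term. Unlike in `LHSteps`, no step crosses an
abstraction. -/
inductive Lam.HEval : Lam → Prop
  | neutral {t : Lam} : t.Neutral → HEval t
  | lam {t : Lam} : HEval t → HEval (.lam t)
  | spine {t u : Lam} : LSpine LBetaRoot t u → HEval u → HEval t

/-- Multistep spine reduction. -/
def LSpineSteps : Lam → Lam → Prop := Relation.ReflTransGen (LSpine LBetaRoot)

theorem LSpine.liftAt {t u : Lam} (h : LSpine LBetaRoot t u) (d : ℕ) :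
    LSpine LBetaRoot (t.liftAt d) (u.liftAt d) := by
  induction h with
  | root h =>
    obtain ⟨t, u⟩ := h
    rw [← Lam.subst_liftAt_succ_of_le t u d.zero_le]
    exact .root (.beta _ _)
  | appL u _ ih => exact .appL _ ih

theorem LSpineSteps.appL {t t' : Lam} (u : Lam) (h : LSpineSteps t t') :
    LSpineSteps (.app t u) (.app t' u) :=
  Relation.ReflTransGen.lift (Lam.app · u) (fun _ _ => .appL u) _ _ h

theorem LHSteps.lam {t u : Lam} (h : LHSteps t u) : LHSteps (.lam t) (.lam u) :=
  Relation.ReflTransGen.lift Lam.lam (fun _ _ => .lam) _ _ h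

namespace Lam

theorem Neutral.liftAt {t : Lam} (h : t.Neutral) (d : ℕ) : (t.liftAt d).Neutral := by
  induction h with
  | var n => exact .var _
  | app u _ ih => exact .app _ ih

theorem Neutral.headStep_eq_none {t : Lam} (h : t.Neutral) : t.headStep = none := by
  induction h with
  | var n => rfl
  | app u h ih => cases h <;> simp [headStep, ih]

theorem neutral_of_headStep_eq_none {t : Lam} (h : t.headStep = none) (ht : ∀ b, t ≠ .lam b) :
    t.Neutral := by
  fun_induction headStep t with
  | case1 n => exact .var n
  | case2 t => exact absurd rfl (ht t)
  | case3 t u => cases h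
  | case4 t u ht' ih => exact .app u (ih (Option.map_eq_none_iff.1 h) ht')

theorem hEval_of_headStep_eq_none {t : Lam} (h : t.headStep = none) : t.HEval := by
  induction t with
  | lam t ih => exact .lam (ih (Option.map_eq_none_iff.1 h))
  | var n => exact .neutral (.var n)
  | app t u => exact .neutral (neutral_of_headStep_eq_none h nofun)

theorem HEval.of_lhStep {t u : Lam} (h : LHStep t u) (hu : u.HEval) : t.HEval := by
  induction h with
  | spine h => exact .spine h hu
  | lam _ ih =>
    cases hu with
    | neutral h => cases h
    | lam hu => exact .lam (ih hu)
    | spine h => cases h with | root h => cases h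

theorem hEval_iff_hConv {t : Lam} : t.HEval ↔ t.HConv := by
  constructor
  · intro h
    induction h with
    | neutral h => exact ⟨_, .refl, lhnf_iff_headStep_eq_none.2 h.headStep_eq_none⟩
    | lam _ ih =>
      obtain ⟨v, hv, hnf⟩ := ih
      rw [lhnf_iff_headStep_eq_none] at hnf
      exact ⟨.lam v, hv.lam, lhnf_iff_headStep_eq_none.2 (by simp [headStep, hnf])⟩
    | spine h _ ih =>
      obtain ⟨v, hv, hnf⟩ := ih
      exact ⟨v, hv.head (.spine h), hnf⟩
  · rintro ⟨v, hv, hnf⟩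
    induction hv using Relation.ReflTransGen.head_induction_on with
    | refl => exact hEval_of_headStep_eq_none (lhnf_iff_headStep_eq_none.1 hnf)
    | head h _ ih => exact .of_lhStep h ih

theorem HEval.of_lSpineSteps {t u : Lam} (h : LSpineSteps t u) (hu : u.HEval) : t.HEval := by
  induction h using Relation.ReflTransGen.head_induction_on with
  | refl => exact hu
  | head h _ ih => exact .spine h ih

theorem HEval.app_liftAt_var {t : Lam} (h : t.HEval) : (app (t.liftAt 0) (.var 0)).HEval := by
  induction h with
  | neutral h => exact .neutral (.app _ (h.liftAt 0))
  | @lam t ht _ =>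
    have beta := LBetaRoot.beta (t.liftAt 1) (.var 0)
    rw [subst_liftAt_succ_var] at beta
    exact .spine (.root beta) ht
  | spine h _ ih => exact .spine (.appL _ (h.liftAt 0)) ih

end Lam

/-! ### η-expansion -/

/-- Multistep η-reduction at the root. -/
def LEtaRootSteps : Lam → Lam → Prop := Relation.ReflTransGen LEtaRoot

/-- Parallel η-reduction. The η-steps at the root are collected in the first premise of each
rule, so that inverting `LParEta u t` along the shape of `t` exposes a term of the same shape. -/
inductive LParEta : Lam → Lam → Prop
  | var {u : Lam} {n : ℕ} : LEtaRootSteps u (.var n) → LParEta u (.var n)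
  | lam {u v t : Lam} : LEtaRootSteps u (.lam v) → LParEta v t → LParEta u (.lam t)
  | app {u v r t s : Lam} :
      LEtaRootSteps u (.app v r) → LParEta v t → LParEta r s → LParEta u (.app t s)

theorem LEtaRoot.liftAt {u v : Lam} (h : LEtaRoot u v) (d : ℕ) :
    LEtaRoot (u.liftAt d) (v.liftAt d) := by
  obtain ⟨v⟩ := h
  have eta := LEtaRoot.eta (v.liftAt d)
  rwa [← v.liftAt_liftAt_of_le d.zero_le] at eta

theorem LEtaRoot.subst {u v : Lam} (h : LEtaRoot u v) (x : ℕ) (r : Lam) :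
    LEtaRoot (u.subst x r) (v.subst x r) := by
  obtain ⟨v⟩ := h
  have eta := LEtaRoot.eta (v.subst x r)
  rwa [← v.subst_succ_liftAt_of_le r x.zero_le] at eta

theorem LEtaRoot.lSpine_app {u v : Lam} (h : LEtaRoot u v) (r : Lam) :
    LSpine LBetaRoot (.app u r) (.app v r) := by
  obtain ⟨v⟩ := h
  have beta := LBetaRoot.beta (.app (v.liftAt 0) (.var 0)) r
  simp only [Lam.subst, Lam.subst_liftAt_self, if_true] at beta
  exact .root beta

namespace LEtaRootSteps

variable {u v : Lam}

theorem liftAt (h : LEtaRootSteps u v) (d : ℕ) : LEtaRootSteps (u.liftAt d) (v.liftAt d) :=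
  Relation.ReflTransGen.lift (Lam.liftAt · d) (fun _ _ h => h.liftAt d) _ _ h

theorem subst (h : LEtaRootSteps u v) (x : ℕ) (r : Lam) :
    LEtaRootSteps (u.subst x r) (v.subst x r) :=
  Relation.ReflTransGen.lift (Lam.subst · x r) (fun _ _ h => h.subst x r) _ _ h

theorem lSpineSteps_app (h : LEtaRootSteps u v) (r : Lam) :
    LSpineSteps (.app u r) (.app v r) :=
  Relation.ReflTransGen.lift (Lam.app · r) (fun _ _ h => h.lSpine_app r) _ _ h

theorem hEval (h : LEtaRootSteps u v) (hv : v.HEval) : u.HEval := by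
  induction h using Relation.ReflTransGen.head_induction_on with
  | refl => exact hv
  | head h _ ih =>
    cases h
    exact .lam ih.app_liftAt_var

end LEtaRootSteps

namespace LParEta

theorem refl (t : Lam) : LParEta t t := by
  induction t with
  | var n => exact .var .refl
  | lam t ih => exact .lam .refl ih
  | app t s iht ihs => exact .app .refl iht ihs

theorem of_lEtaRootSteps {u v t : Lam} (huv : LEtaRootSteps u v) (h : LParEta v t) :
    LParEta u t := by
  cases h with
  | var hv => exact .var (huv.trans hv)
  | lam hv h => exact .lam (huv.trans hv) h
  | app hv h hr => exact .app (huv.trans hv) h hr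

theorem of_lEta {u t : Lam} (h : LEta u t) : LParEta u t := by
  induction h with
  | root h => exact .of_lEtaRootSteps (.single h) (.refl _)
  | lam _ ih => exact .lam .refl ih
  | appL r _ ih => exact .app .refl ih (.refl r)
  | appR s _ ih => exact .app .refl (.refl s) ih

theorem fill {u t : Lam} (h : LParEta u t) (C : LCtx) : LParEta (C.fill u) (C.fill t) := by
  induction C with
  | hole => exact h
  | lam C ih => exact .lam .refl ih
  | appL C s ih => exact .app .refl ih (.refl s)
  | appR s C ih => exact .app .refl (.refl s) ih

theorem liftAt {u t : Lam} (h : LParEta u t) (d : ℕ) : LParEta (u.liftAt d) (t.liftAt d) := by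
  induction h generalizing d with
  | var hu => exact .var (hu.liftAt d)
  | lam hu _ ih => exact .lam (hu.liftAt d) (ih (d + 1))
  | app hu _ _ iht ihs => exact .app (hu.liftAt d) (iht d) (ihs d)

theorem subst {u t r s : Lam} (h : LParEta u t) (hrs : LParEta r s) (x : ℕ) :
    LParEta (u.subst x r) (t.subst x s) := by
  induction h generalizing x r s with
  | @var u n hu =>
    refine .of_lEtaRootSteps (hu.subst x r) ?_
    simp only [Lam.subst]
    split_ifs
    exacts [hrs, .refl _, .refl _]
  | lam hu _ ih => exact .lam (hu.subst x r) (ih (hrs.liftAt 0) (x + 1))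
  | app hu _ _ iht ihs => exact .app (hu.subst x r) (iht hrs x) (ihs hrs x)

theorem exists_lSpineSteps_of_lSpine {t t' u : Lam} (h : LSpine LBetaRoot t t')
    (hu : LParEta u t) :
    ∃ v w, LEtaRootSteps u v ∧ LSpineSteps v w ∧ LParEta w t' := by
  induction h generalizing u with
  | root h =>
    obtain ⟨t, s⟩ := h
    cases hu with
    | @app _ v r _ _ huv hv hr =>
      cases hv with
      | lam hv hb =>
        exact ⟨_, _, huv, (hv.lSpineSteps_app r).tail (.root (.beta _ r)), hb.subst hr 0⟩
  | appL s _ ih =>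
    cases hu with
    | @app _ v r _ _ huv hv hr =>
      obtain ⟨v', w, hvv', hv'w, hw⟩ := ih hv
      exact ⟨_, _, huv, (hvv'.lSpineSteps_app r).trans (hv'w.appL r), .app .refl hw hr⟩

theorem exists_neutral_of_neutral {t u : Lam} (h : t.Neutral) (hu : LParEta u t) :
    ∃ v w, LEtaRootSteps u v ∧ LSpineSteps v w ∧ w.Neutral := by
  induction h generalizing u with
  | var n =>
    cases hu with
    | var hu => exact ⟨_, _, hu, .refl, .var n⟩
  | app s _ ih =>
    cases hu with
    | @app _ v r _ _ huv hv hr =>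
      obtain ⟨v', w, hvv', hv'w, hw⟩ := ih hv
      exact ⟨_, _, huv, (hvv'.lSpineSteps_app r).trans (hv'w.appL r), .app r hw⟩

theorem hEval {u t : Lam} (h : LParEta u t) (ht : t.HEval) : u.HEval := by
  induction ht generalizing u with
  | neutral ht =>
    obtain ⟨v, w, huv, hvw, hw⟩ := exists_neutral_of_neutral ht h
    exact huv.hEval (.of_lSpineSteps hvw (.neutral hw))
  | lam _ ih =>
    cases h with
    | lam huv hv => exact huv.hEval (.lam (ih hv))
  | spine hs _ ih =>
    obtain ⟨v, w, huv, hvw, hw⟩ := exists_lSpineSteps_of_lSpine hs h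
    exact huv.hEval (.of_lSpineSteps hvw (ih hw))

end LParEta

theorem LEta.ctxLe {u t : Lam} (h : LEta u t) : CtxLe t u := fun C hC =>
  Lam.hEval_iff_hConv.1 (((LParEta.of_lEta h).fill C).hEval (Lam.hEval_iff_hConv.2 hC))

/-! ### Strictness -/

/-- The context `⟨·⟩ @◦ x @◦ x`, which separates `I` from its η-expansion `1`. -/
def twoArgsCtx : CCtx := .appL .white (.appL .white .hole (.var 0)) (.var 0)

theorem bigStep_twoArgsCtx_id :
    BigStep (twoArgsCtx.fill ((Lam.lam (.var 0)).tag .black)) 1 := by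
  rw [CTerm.bigStep_iff_of_headStep_eq_some rfl]
  exact ⟨0, (CTerm.bigStep_iff_of_headStep_eq_none rfl).2 rfl, rfl⟩

theorem two_le_of_bigStep_twoArgsCtx_one {k : ℕ}
    (h : BigStep (twoArgsCtx.fill ((Lam.lam (.lam (.app (.var 1) (.var 0)))).tag .black)) k) :
    2 ≤ k := by
  obtain ⟨k₁, h₁, rfl⟩ := (CTerm.bigStep_iff_of_headStep_eq_some rfl).1 h
  obtain ⟨k₂, -, rfl⟩ := (CTerm.bigStep_iff_of_headStep_eq_some rfl).1 h₁
  exact Nat.le_add_left 2 k₂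

theorem not_impLe_id_one : ¬ ImpLe (.lam (.var 0)) (.lam (.lam (.app (.var 1) (.var 0)))) := by
  intro h
  obtain ⟨k, hk, hbig⟩ := h twoArgsCtx 1 bigStep_twoArgsCtx_id
  exact absurd (two_le_of_bigStep_twoArgsCtx_one hbig) (by omega)

/-- Hierarchy: `⊑int ⊆ ⊑int·imp ⊊ ⊑ctx`, the strictness of the second inclusion being
witnessed by `I = λx.x` and `1 = λxy.xy`. -/
theorem hierarchy_of_preorders :
    (∀ t u, IntLe t u → ImpLe t u) ∧
    (∀ t u, ImpLe t u → CtxLe t u) ∧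
    CtxLe (.lam (.var 0)) (.lam (.lam (.app (.var 1) (.var 0)))) ∧
    ¬ ImpLe (.lam (.var 0)) (.lam (.lam (.app (.var 1) (.var 0)))) := by
  refine ⟨fun t u h => h.impCtxLe, fun t u h => h.ctxLe, ?_, not_impLe_id_one⟩
  exact LEta.ctxLe (.lam (.root (.eta (.var 0))))
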